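/- For every r₀ ∈ (0, π/2) there exist ε ∈ (0, r₀) and a smooth function h : ℝ → ℝ such that: (i) h(r) = r for all r ∈ [0, ε]; (ii) h(r) = sin r for all r ∈ [r₀, π/2]; (iii) 0 ≤ h'(r) ≤ 1 for all r ∈ [0, π/2]; and (iv) h''(r) ≤ 0 for all r ∈ [0, π/2]. -/

import Mathlib

/-!
A function with `h 0 = 0`, `h' 0 = 1` is determined by `G = -h''` through Taylor's formula
`h r = r - r * ∫₀ʳ G + ∫₀ʳ s * G s`, and `G = sin` gives back `h = sin`. So it suffices to find a
smooth `G`, nonnegative on `[0, π]`, vanishing near `0`, equal to `sin` beyond `r₀`, and having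
the same zeroth and first moments on `[0, r₀]` as `sin` (`exists_curvature_profile`): equality of
the moments forces `h = sin` on `[r₀, ∞)`. To get `G`, cut `sin` off smoothly near `0`. The removed
mass `m` has its barycentre `c` strictly inside `(0, r₀)`, so putting it back as `m` times a narrow
bump symmetric about `c` (`exists_symmetric_bump`) restores both moments while keeping `G`
nonnegative and zero near `0`. Finally `h' = 1 - ∫₀ʳ G` decreases from `1` to
`1 - ∫₀^{π/2} sin = 0` on `[0, π/2]`.
-/

open Real

/-- A smooth probability density with compact support in `(0, R)` and prescribed barycentre
`c ∈ (0, R)`. -/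
lemma exists_symmetric_bump {c R : ℝ} (hc : 0 < c) (hcR : c < R) :
    ∃ (ε : ℝ) (ψ : ℝ → ℝ), 0 < ε ∧ ε < R ∧ ContDiff ℝ (⊤ : ℕ∞) ψ ∧ (∀ s, 0 ≤ ψ s) ∧
      (∀ s ≤ ε, ψ s = 0) ∧ (∀ s, R ≤ s → ψ s = 0) ∧
      (∫ s in (0 : ℝ)..R, ψ s) = 1 ∧ (∫ s in (0 : ℝ)..R, s * ψ s) = c := by
  obtain ⟨w, hw0, hwc, hwR⟩ : ∃ w : ℝ, 0 < w ∧ w < c ∧ w < R - c := by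
    obtain ⟨w, h0, h1⟩ := exists_between (lt_min hc (sub_pos.2 hcR))
    exact ⟨w, h0, h1.trans_le (min_le_left _ _), h1.trans_le (min_le_right _ _)⟩
  let f : ContDiffBump c := ⟨w / 2, w, by linarith, by linarith⟩
  let ψ : ℝ → ℝ := f.normed MeasureTheory.volume
  have hψ : ContDiff ℝ (⊤ : ℕ∞) ψ := f.contDiff_normed
  have hsupp : Function.support ψ = Metric.ball c w := f.support_normed_eq
  have hzero : ∀ s, w ≤ |s - c| → ψ s = 0 := fun s hs => by
    by_contra h
    have : s ∈ Metric.ball c w := hsupp ▸ h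
    rw [Metric.mem_ball, Real.dist_eq] at this
    linarith
  have hsub : Function.support ψ ⊆ Set.Ioc 0 R := by
    rw [hsupp, Real.ball_eq_Ioo]
    intro s hs
    exact ⟨by linarith [hs.1], by linarith [hs.2]⟩
  have hone : ∫ s, ψ s = 1 := f.integral_normed
  have hint : MeasureTheory.Integrable ψ := f.integrable_normed
  have hint' : MeasureTheory.Integrable (fun s => s * ψ s) :=
    (continuous_id.mul hψ.continuous).integrable_of_hasCompactSupport
      (f.hasCompactSupport_normed.mul_left)
  -- The reflection `s ↦ 2c - s` preserves `ψ` and reverses the sign of `s - c`.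
  have hodd : ∫ s, (s - c) * ψ s = 0 := by
    have h1 := MeasureTheory.integral_sub_left_eq_self (fun s => (s - c) * ψ s)
      MeasureTheory.volume (2 * c)
    have h2 : ∀ s, (2 * c - s - c) * ψ (2 * c - s) = -((s - c) * ψ s) := fun s => by
      have h3 : ψ (c - (s - c)) = ψ (c + (s - c)) := f.normed_sub (s - c)
      rw [show c - (s - c) = 2 * c - s by ring, show c + (s - c) = s by ring] at h3
      rw [h3]; ring
    simp only [h2, MeasureTheory.integral_neg] at h1
    linarith
  refine ⟨c - w, ψ, by linarith, by linarith, hψ, f.nonneg_normed, fun s hs => ?_, fun s hs => ?_,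
    ?_, ?_⟩
  · exact hzero s (by rw [abs_sub_comm]; exact le_trans (by linarith) (le_abs_self _))
  · exact hzero s (le_trans (by linarith) (le_abs_self _))
  · rw [intervalIntegral.integral_eq_integral_of_support_subset hsub, hone]
  · rw [intervalIntegral.integral_eq_integral_of_support_subset
      ((Function.support_mul_subset_right _ _).trans hsub)]
    simp only [sub_mul] at hodd
    rw [MeasureTheory.integral_sub hint' (hint.const_mul c), MeasureTheory.integral_const_mul,
      hone] at hodd
    linarith

/-- The function `G = -h''` for the interpolation `h`: it vanishes near `0`, agrees with `sin`
beyond `r₀`, and has the same moments of order `0` and `1` as `sin` on `[0, r₀]`. -/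
lemma exists_curvature_profile {r₀ : ℝ} (h0 : 0 < r₀) (h1 : r₀ < π / 2) :
    ∃ (ε : ℝ) (G : ℝ → ℝ), 0 < ε ∧ ε < r₀ ∧ ContDiff ℝ (⊤ : ℕ∞) G ∧
      (∀ s ∈ Set.Icc 0 π, 0 ≤ G s) ∧ (∀ s ≤ ε, G s = 0) ∧ (∀ s, r₀ ≤ s → G s = Real.sin s) ∧
      (∫ s in (0 : ℝ)..r₀, (G s - Real.sin s)) = 0 ∧
      (∫ s in (0 : ℝ)..r₀, s * (G s - Real.sin s)) = 0 := by
  let χ : ℝ → ℝ := fun s => Real.smoothTransition ((s - r₀ / 2) / (r₀ / 2))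
  have hχ : ContDiff ℝ (⊤ : ℕ∞) χ :=
    Real.smoothTransition.contDiff.comp ((contDiff_id.sub contDiff_const).div_const _)
  have hχ0 : ∀ s ≤ r₀ / 2, χ s = 0 := fun s hs =>
    Real.smoothTransition.zero_of_nonpos
      (div_nonpos_of_nonpos_of_nonneg (by linarith) (by linarith))
  have hχ1 : ∀ s, r₀ ≤ s → χ s = 1 := fun s hs =>
    Real.smoothTransition.one_of_one_le ((one_le_div (by linarith)).2 (by linarith))
  have hχlt : ∀ s < r₀, χ s < 1 := fun s hs =>
    Real.smoothTransition.lt_one_of_lt_one ((div_lt_one (by linarith)).2 (by linarith))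
  have hχnn : ∀ s, 0 ≤ χ s := fun s => Real.smoothTransition.nonneg _
  let ρ : ℝ → ℝ := fun s => Real.sin s * (1 - χ s)
  have hρ : Continuous ρ := Real.continuous_sin.mul (continuous_const.sub hχ.continuous)
  have hρpos : ∀ s ∈ Set.Ioo 0 r₀, 0 < ρ s := fun s hs =>
    mul_pos (Real.sin_pos_of_pos_of_lt_pi hs.1 (by linarith [hs.2, Real.pi_pos]))
      (sub_pos.2 (hχlt s hs.2))
  have hm : 0 < ∫ s in (0 : ℝ)..r₀, ρ s :=
    intervalIntegral.intervalIntegral_pos_of_pos_on (hρ.intervalIntegrable _ _) hρpos h0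
  have hm1 : 0 < ∫ s in (0 : ℝ)..r₀, s * ρ s :=
    intervalIntegral.intervalIntegral_pos_of_pos_on
      ((continuous_id.mul hρ).intervalIntegrable _ _) (fun s hs => mul_pos hs.1 (hρpos s hs)) h0
  have hm2 : 0 < ∫ s in (0 : ℝ)..r₀, (r₀ * ρ s - s * ρ s) :=
    intervalIntegral.intervalIntegral_pos_of_pos_on
      (((continuous_const.mul hρ).sub (continuous_id.mul hρ)).intervalIntegrable _ _)
      (fun s hs => by rw [← sub_mul]; exact mul_pos (sub_pos.2 hs.2) (hρpos s hs)) h0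
  rw [intervalIntegral.integral_sub ((continuous_const.fun_mul hρ).intervalIntegrable _ _)
    ((continuous_id'.fun_mul hρ).intervalIntegrable _ _), intervalIntegral.integral_const_mul] at hm2
  set m := ∫ s in (0 : ℝ)..r₀, ρ s with hmdef
  set m₁ := ∫ s in (0 : ℝ)..r₀, s * ρ s with hm₁def
  obtain ⟨ε, ψ, hε0, hεr, hψ, hψnn, hψ0, hψ1, hI0, hI1⟩ :=
    exists_symmetric_bump (c := m₁ / m) (R := r₀) (div_pos hm1 hm)
      ((div_lt_iff₀ hm).2 (by linarith))
  have hdiff : ∀ s, Real.sin s * χ s + m * ψ s - Real.sin s = m * ψ s - ρ s := fun s => by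
    simp only [ρ]; ring
  refine ⟨min ε (r₀ / 2), fun s => Real.sin s * χ s + m * ψ s, lt_min hε0 (by linarith),
    (min_le_left _ _).trans_lt hεr, (Real.contDiff_sin.mul hχ).add (contDiff_const.mul hψ),
    fun s hs => ?_, fun s hs => ?_, fun s hs => ?_, ?_, ?_⟩
  · exact add_nonneg (mul_nonneg (Real.sin_nonneg_of_mem_Icc hs) (hχnn s))
      (mul_nonneg hm.le (hψnn s))
  · simp [hχ0 s (hs.trans (min_le_right _ _)), hψ0 s (hs.trans (min_le_left _ _))]
  · simp [hχ1 s hs, hψ1 s hs]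
  · simp only [hdiff]
    rw [intervalIntegral.integral_sub ((continuous_const.fun_mul hψ.continuous).intervalIntegrable _ _)
      (hρ.intervalIntegrable _ _), intervalIntegral.integral_const_mul, hI0, ← hmdef]
    ring
  · have e : ∀ s, s * (m * ψ s - ρ s) = m * (s * ψ s) - s * ρ s := fun s => by ring
    simp only [hdiff, e]
    rw [intervalIntegral.integral_sub
      ((continuous_const.fun_mul (continuous_id'.fun_mul hψ.continuous)).intervalIntegrable _ _)
      ((continuous_id'.fun_mul hρ).intervalIntegrable _ _), intervalIntegral.integral_const_mul, hI1,
      ← hm₁def]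
    field_simp
    ring

lemma contDiff_integral_of_contDiff {f : ℝ → ℝ} (hf : ContDiff ℝ (⊤ : ℕ∞) f) (a : ℝ) :
    ContDiff ℝ (⊤ : ℕ∞) (fun r => ∫ s in a..r, f s) := by
  have hd : ∀ r, HasDerivAt (fun r => ∫ s in a..r, f s) (f r) r := fun r =>
    hf.continuous.integral_hasStrictDerivAt a r |>.hasDerivAt
  rw [contDiff_infty_iff_deriv]
  refine ⟨fun r => (hd r).differentiableAt, ?_⟩
  rwa [show deriv (fun r => ∫ s in a..r, f s) = f from funext fun r => (hd r).deriv]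

/-- Taylor's formula with integral remainder for `sin` at `0`, to first order. -/
lemma sin_eq_taylor (r : ℝ) :
    Real.sin r = r - r * (∫ s in (0 : ℝ)..r, Real.sin s) + ∫ s in (0 : ℝ)..r, s * Real.sin s := by
  have h : (∫ s in (0 : ℝ)..r, s * Real.sin s)
      = (Real.sin r - r * Real.cos r) - (Real.sin 0 - 0 * Real.cos 0) := by
    refine intervalIntegral.integral_eq_sub_of_hasDerivAt
      (f := fun s => Real.sin s - s * Real.cos s) (fun s _ => ?_)
      ((continuous_id.mul Real.continuous_sin).intervalIntegrable _ _)
    convert (Real.hasDerivAt_sin s).sub ((hasDerivAt_id s).mul (Real.hasDerivAt_cos s)) using 1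
    · rfl
    · simp only [id]
      ring
  rw [h, integral_sin]
  simp
  ring

/-- For every `r₀ ∈ (0, π/2)` there is a smooth concave interpolation `h`
between the identity near `0` and `sin` on `[r₀, π/2]`, with slope between `0`
and `1` on `[0, π/2]`. -/
theorem exists_concave_interpolation_id_sin (r₀ : ℝ)
    (hr₀ : r₀ ∈ Set.Ioo (0 : ℝ) (π / 2)) :
    ∃ (ε : ℝ) (h : ℝ → ℝ), ε ∈ Set.Ioo (0 : ℝ) r₀ ∧
      ContDiff ℝ (⊤ : ℕ∞) h ∧
      (∀ r ∈ Set.Icc (0 : ℝ) ε, h r = r) ∧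
      (∀ r ∈ Set.Icc r₀ (π / 2), h r = Real.sin r) ∧
      (∀ r ∈ Set.Icc (0 : ℝ) (π / 2), 0 ≤ deriv h r ∧ deriv h r ≤ 1) ∧
      (∀ r ∈ Set.Icc (0 : ℝ) (π / 2), deriv (deriv h) r ≤ 0) := by
  obtain ⟨ε, G, hε0, hεr, hG, hGnn, hG0, hG1, hI0, hI1⟩ := exists_curvature_profile hr₀.1 hr₀.2
  have hGc := hG.continuous
  have hsG : ContDiff ℝ (⊤ : ℕ∞) (fun s => s * G s) := contDiff_id.mul hG
  have hsGc := hsG.continuous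
  have hdc : Continuous fun s => G s - Real.sin s := hGc.sub Real.continuous_sin
  have hsdc : Continuous fun s => s * (G s - Real.sin s) := continuous_id.mul hdc
  -- Beyond `r₀` the integrands vanish, so the moment identities persist on `[0, r]`.
  have hM0 : ∀ r, r₀ ≤ r → (∫ s in (0 : ℝ)..r, G s) = ∫ s in (0 : ℝ)..r, Real.sin s := by
    intro r hr
    rw [← sub_eq_zero, ← intervalIntegral.integral_sub (hGc.intervalIntegrable _ _)
      (Real.continuous_sin.intervalIntegrable _ _),
      ← intervalIntegral.integral_add_adjacent_intervals (hdc.intervalIntegrable 0 r₀)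
        (hdc.intervalIntegrable r₀ r), hI0, zero_add]
    refine (intervalIntegral.integral_congr (g := fun _ => (0 : ℝ)) fun s hs => ?_).trans (by simp)
    rw [Set.uIcc_of_le hr] at hs
    simp [hG1 s hs.1]
  have hM1 : ∀ r, r₀ ≤ r → (∫ s in (0 : ℝ)..r, s * G s) = ∫ s in (0 : ℝ)..r, s * Real.sin s := by
    intro r hr
    rw [← sub_eq_zero, ← intervalIntegral.integral_sub (hsGc.intervalIntegrable _ _)
      ((continuous_id'.fun_mul Real.continuous_sin).intervalIntegrable _ _)]
    simp only [← mul_sub]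
    rw [← intervalIntegral.integral_add_adjacent_intervals (hsdc.intervalIntegrable 0 r₀)
        (hsdc.intervalIntegrable r₀ r), hI1, zero_add]
    refine (intervalIntegral.integral_congr (g := fun _ => (0 : ℝ)) fun s hs => ?_).trans (by simp)
    rw [Set.uIcc_of_le hr] at hs
    simp [hG1 s hs.1]
  let h : ℝ → ℝ := fun r => r - r * (∫ s in (0 : ℝ)..r, G s) + ∫ s in (0 : ℝ)..r, s * G s
  have hA : ∀ r, HasDerivAt (fun r => ∫ s in (0 : ℝ)..r, G s) (G r) r := fun r =>
    (hGc.integral_hasStrictDerivAt 0 r).hasDerivAt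
  have hB : ∀ r, HasDerivAt (fun r => ∫ s in (0 : ℝ)..r, s * G s) (r * G r) r := fun r =>
    (hsGc.integral_hasStrictDerivAt 0 r).hasDerivAt
  have hd : deriv h = fun r => 1 - ∫ s in (0 : ℝ)..r, G s := by
    funext r
    have := (((hasDerivAt_id r).sub ((hasDerivAt_id r).mul (hA r))).add (hB r)).deriv
    refine Eq.trans this ?_
    simp only [id]
    ring
  have hdd : ∀ r, deriv (deriv h) r = -G r := fun r => by
    rw [hd]
    exact ((hA r).const_sub 1).deriv
  refine ⟨ε, h, ⟨hε0, hεr⟩, ?_, fun r hr => ?_, fun r hr => ?_, fun r hr => ?_, fun r hr => ?_⟩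
  · exact (contDiff_id.sub (contDiff_id.mul (contDiff_integral_of_contDiff hG 0))).add
      (contDiff_integral_of_contDiff hsG 0)
  · have e0 : (∫ s in (0 : ℝ)..r, G s) = 0 := by
      refine (intervalIntegral.integral_congr (g := fun _ => (0 : ℝ)) fun s hs => ?_).trans
        (by simp)
      rw [Set.uIcc_of_le hr.1] at hs
      exact hG0 s (hs.2.trans hr.2)
    have e1 : (∫ s in (0 : ℝ)..r, s * G s) = 0 := by
      refine (intervalIntegral.integral_congr (g := fun _ => (0 : ℝ)) fun s hs => ?_).trans
        (by simp)
      rw [Set.uIcc_of_le hr.1] at hs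
      simp [hG0 s (hs.2.trans hr.2)]
    simp [h, e0, e1]
  · simp only [h]
    rw [hM0 r hr.1, hM1 r hr.1, ← sin_eq_taylor]
  · have hpi := Real.pi_pos
    have hlow : 0 ≤ ∫ s in (0 : ℝ)..r, G s :=
      intervalIntegral.integral_nonneg hr.1 fun s hs => hGnn s ⟨hs.1, by linarith [hs.2, hr.2]⟩
    have hrest : 0 ≤ ∫ s in r..(π / 2), G s :=
      intervalIntegral.integral_nonneg hr.2 fun s hs =>
        hGnn s ⟨hr.1.trans hs.1, by linarith [hs.2]⟩
    have hsum := intervalIntegral.integral_add_adjacent_intervals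
      (hGc.intervalIntegrable (μ := MeasureTheory.volume) 0 r) (hGc.intervalIntegrable r (π / 2))
    have htot : (∫ s in (0 : ℝ)..(π / 2), G s) = 1 := by
      rw [hM0 _ hr₀.2.le, integral_sin]
      simp
    rw [hd]
    constructor <;> dsimp only <;> linarith
  · rw [hdd]
    linarith [hGnn r ⟨hr.1, by linarith [hr.2, Real.pi_pos]⟩]
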